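/- Under Assumption 3, assume X2 ∩ X4 and X1 ∩ X3 are nonempty, and let z, y ∈ ℝ^n be given by z_i = max{w_i : w ∈ X2 ∩ X4} and y_i = min{w_i : w ∈ X1 ∩ X3} (these maxima and minima are attained). Then X ≠ ∅ if and only if y_i ≤ z_i for all i ∈ {1,…,n}. Moreover, if X ≠ ∅, then y, z ∈ X, z_i = max{w_i : w ∈ X} and y_i = min{w_i : w ∈ X} for all i, and y_1 = z_1 = w_init, y_n = z_n = w_fin. -/

import Mathlib

/-!
The hypothesis `hA3` makes `ell` and `w ↦ (1 - h γ) w` nondecreasing. Hence each constraint of the problem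
bounds one coordinate by a nondecreasing function of a neighbouring one, and `X2 ∩ X4` is closed
under coordinatewise maxima while `X1 ∩ X3` is closed under coordinatewise minima. In particular
the vector `z` of coordinatewise maxima lies in `X2 ∩ X4` and the vector `y` of coordinatewise
minima lies in `X1 ∩ X3`; this is `memX2_memX4_of_isGreatest` and `memX1_memX3_of_isLeast`.

If `y ≤ z`, then `wmin ≤ y ≤ z ≤ wmax`, so both `y` and `z` satisfy the bounds missing for
membership in `X`. Conversely any `w ∈ X` satisfies `y ≤ w ≤ z`. Extremality in `X` is inherited
from the larger sets `X2 ∩ X4` and `X1 ∩ X3`, and at the two endpoints `wmin = wmax`.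
-/

/-- The function ℓ from the speed-planning problem. -/
noncomputable def ell (h γ g M Pmax μ w : ℝ) : ℝ :=
  if w ≤ (Pmax / (M * g * μ)) ^ 2 then (1 - h * γ) * w + h * g * μ
  else (1 - h * γ) * w + h * Pmax / (M * Real.sqrt w)

/-- Membership in `X1`. -/
def memX1 (n : ℕ) (h γ g M Pmax μ c : ℝ) (α wmin w : ℕ → ℝ) : Prop :=
  (∀ i, 1 ≤ i → i ≤ n → wmin i ≤ w i) ∧
  (∀ j, 1 ≤ j → j ≤ n - 1 →
    w (j + 1) ≤ ell h γ g M Pmax μ (w j) - h * g * (Real.sin (α j) + c))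

/-- Membership in `X2`. -/
def memX2 (n : ℕ) (h γ g M Pmax μ c : ℝ) (α wmax w : ℕ → ℝ) : Prop :=
  (∀ i, 1 ≤ i → i ≤ n → w i ≤ wmax i) ∧
  (∀ j, 1 ≤ j → j ≤ n - 1 →
    w (j + 1) ≤ ell h γ g M Pmax μ (w j) - h * g * (Real.sin (α j) + c))

/-- Membership in `X3`. -/
def memX3 (n : ℕ) (h γ g μ c : ℝ) (α wmin w : ℕ → ℝ) : Prop :=
  (∀ i, 1 ≤ i → i ≤ n → wmin i ≤ w i) ∧
  (∀ j, 1 ≤ j → j ≤ n - 1 →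
    (1 - h * γ) * w j - h * g * (Real.sin (α j) + c + μ) ≤ w (j + 1))

/-- Membership in `X4`. -/
def memX4 (n : ℕ) (h γ g μ c : ℝ) (α wmax w : ℕ → ℝ) : Prop :=
  (∀ i, 1 ≤ i → i ≤ n → w i ≤ wmax i) ∧
  (∀ j, 1 ≤ j → j ≤ n - 1 →
    (1 - h * γ) * w j - h * g * (Real.sin (α j) + c + μ) ≤ w (j + 1))

/-- Membership in `X = X1 ∩ X2 ∩ X3 ∩ X4`. -/
def memX (n : ℕ) (h γ g M Pmax μ c : ℝ) (α wmin wmax w : ℕ → ℝ) : Prop :=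
  memX1 n h γ g M Pmax μ c α wmin w ∧ memX2 n h γ g M Pmax μ c α wmax w ∧
  memX3 n h γ g μ c α wmin w ∧ memX4 n h γ g μ c α wmax w

/-- `p ↦ a p² + K / p` is nondecreasing on `[s, ∞)` as soon as its derivative
`2 a p - K / p²` is nonnegative at `s`. -/
lemma quad_add_div_mono {a K s p q : ℝ} (ha : 0 ≤ a) (hs : 0 < s)
    (hK : K ≤ 2 * a * s ^ 3) (hsp : s ≤ p) (hpq : p ≤ q) :
    a * p ^ 2 + K / p ≤ a * q ^ 2 + K / q := by
  have hp : 0 < p := hs.trans_le hsp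
  have hq : 0 < q := hp.trans_le hpq
  have hK' : K ≤ a * (p * q * (p + q)) := by
    have h1 : s * s ≤ p * q := by gcongr; exact hsp.trans hpq
    have h2 : s + s ≤ p + q := by linarith
    have h3 : s * s * (s + s) ≤ p * q * (p + q) := by gcongr
    nlinarith [mul_le_mul_of_nonneg_left h3 ha]
  have key : a * q ^ 2 + K / q - (a * p ^ 2 + K / p)
      = (q - p) * (a * (p * q * (p + q)) - K) / (p * q) := by
    field_simp
    ring
  have : 0 ≤ (q - p) * (a * (p * q * (p + q)) - K) / (p * q) :=
    div_nonneg (mul_nonneg (by linarith) (by linarith)) (by positivity)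
  linarith

/-- The hypothesis `hA3` with the real power eliminated: the critical speed is `s²` with
`s = Pmax / (M g μ)`, so its `3/2`-power is `s³`. -/
lemma cubic_bound_of_slope {h γ g M Pmax μ : ℝ} (hg : 0 < g) (hM : 0 < M)
    (hP : 0 < Pmax) (hμ : 0 < μ)
    (hA3 : 0 ≤ 1 - h * γ - h * Pmax / (2 * M * ((Pmax / (M * g * μ)) ^ 2) ^ ((3:ℝ)/2))) :
    h * Pmax / M ≤ 2 * (1 - h * γ) * (Pmax / (M * g * μ)) ^ 3 := by
  have hs : 0 < Pmax / (M * g * μ) := by positivity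
  set s := Pmax / (M * g * μ)
  have hpow : (s ^ 2) ^ ((3:ℝ)/2) = s ^ 3 := by
    rw [← Real.rpow_natCast s 2, ← Real.rpow_mul hs.le, ← Real.rpow_natCast s 3]
    norm_num
  rw [hpow] at hA3
  have h1 : h * Pmax / (2 * M * s ^ 3) ≤ 1 - h * γ := by linarith
  rw [div_le_iff₀ (by positivity)] at h1
  rw [div_le_iff₀ hM]
  linarith

lemma one_sub_mul_nonneg_of_slope {h γ g M Pmax μ : ℝ} (hh : 0 < h) (hg : 0 < g) (hM : 0 < M)
    (hP : 0 < Pmax) (hμ : 0 < μ)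
    (hA3 : 0 ≤ 1 - h * γ - h * Pmax / (2 * M * ((Pmax / (M * g * μ)) ^ 2) ^ ((3:ℝ)/2))) :
    0 ≤ 1 - h * γ := by
  have : 0 ≤ h * Pmax / (2 * M * ((Pmax / (M * g * μ)) ^ 2) ^ ((3:ℝ)/2)) := by positivity
  linarith

lemma ell_monotone {h γ g M Pmax μ : ℝ} (hh : 0 < h) (hg : 0 < g) (hM : 0 < M)
    (hP : 0 < Pmax) (hμ : 0 < μ)
    (hA3 : 0 ≤ 1 - h * γ - h * Pmax / (2 * M * ((Pmax / (M * g * μ)) ^ 2) ^ ((3:ℝ)/2))) :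
    Monotone (ell h γ g M Pmax μ) := by
  have ha := one_sub_mul_nonneg_of_slope hh hg hM hP hμ hA3
  have hK := cubic_bound_of_slope hg hM hP hμ hA3
  have hs : 0 < Pmax / (M * g * μ) := by positivity
  -- The two branches of `ell` agree at the critical speed.
  have hcont : h * Pmax / M / (Pmax / (M * g * μ)) = h * g * μ := by field_simp
  set s := Pmax / (M * g * μ) with hsdef
  have hform : ∀ v, s ^ 2 < v → s ≤ √v ∧
      (1 - h * γ) * v + h * Pmax / (M * √v) = (1 - h * γ) * √v ^ 2 + h * Pmax / M / √v := by
    intro v hv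
    refine ⟨Real.le_sqrt_of_sq_le hv.le, ?_⟩
    rw [Real.sq_sqrt ((sq_nonneg s).trans hv.le), div_div]
  intro w v hwv
  unfold ell
  rw [← hsdef]
  split_ifs with hw hv hv
  · gcongr
  · obtain ⟨h1, h2⟩ := hform v (not_le.mp hv)
    rw [h2]
    calc (1 - h * γ) * w + h * g * μ
        ≤ (1 - h * γ) * s ^ 2 + h * Pmax / M / s := by rw [hcont]; gcongr
      _ ≤ _ := quad_add_div_mono ha hs hK le_rfl h1
  · exact absurd (hwv.trans hv) hw
  · obtain ⟨h1, h2⟩ := hform w (not_le.mp hw)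
    obtain ⟨_, h4⟩ := hform v (not_le.mp hv)
    rw [h2, h4]
    exact quad_add_div_mono ha hs hK h1 (Real.sqrt_le_sqrt hwv)

/-- The vector of coordinatewise maxima over `X2 ∩ X4` belongs to `X2 ∩ X4`. -/
lemma memX2_memX4_of_isGreatest {n : ℕ} {h γ g M Pmax μ c : ℝ} {α wmax z : ℕ → ℝ}
    (hell : Monotone (ell h γ g M Pmax μ))
    (hz : ∀ i, 1 ≤ i → i ≤ n →
      IsGreatest {x : ℝ | ∃ w : ℕ → ℝ,
        (memX2 n h γ g M Pmax μ c α wmax w ∧ memX4 n h γ g μ c α wmax w) ∧ w i = x}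
        (z i)) :
    memX2 n h γ g M Pmax μ c α wmax z ∧ memX4 n h γ g μ c α wmax z := by
  have hb : ∀ i, 1 ≤ i → i ≤ n → z i ≤ wmax i := by
    intro i h1 h2
    obtain ⟨w, ⟨hw, -⟩, hwi⟩ := (hz i h1 h2).1
    exact hwi ▸ hw.1 i h1 h2
  refine ⟨⟨hb, fun j h1 h2 => ?_⟩, ⟨hb, fun j h1 h2 => ?_⟩⟩
  · -- A maximizer of coordinate `j + 1`, whose coordinate `j` is at most `z j`.
    obtain ⟨w, hw, hwj⟩ := (hz (j + 1) (by omega) (by omega)).1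
    have h3 := hell ((hz j h1 (by omega)).2 ⟨w, hw, rfl⟩)
    have h4 := hw.1.2 j h1 h2
    linarith
  · -- A maximizer of coordinate `j`, whose coordinate `j + 1` is at most `z (j + 1)`.
    obtain ⟨w, hw, hwj⟩ := (hz j h1 (by omega)).1
    have h3 := (hz (j + 1) (by omega) (by omega)).2 ⟨w, hw, rfl⟩
    have h4 := hw.2.2 j h1 h2
    rw [hwj] at h4
    linarith

/-- The vector of coordinatewise minima over `X1 ∩ X3` belongs to `X1 ∩ X3`. -/
lemma memX1_memX3_of_isLeast {n : ℕ} {h γ g M Pmax μ c : ℝ} {α wmin y : ℕ → ℝ}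
    (ha : 0 ≤ 1 - h * γ)
    (hy : ∀ i, 1 ≤ i → i ≤ n →
      IsLeast {x : ℝ | ∃ w : ℕ → ℝ,
        (memX1 n h γ g M Pmax μ c α wmin w ∧ memX3 n h γ g μ c α wmin w) ∧ w i = x}
        (y i)) :
    memX1 n h γ g M Pmax μ c α wmin y ∧ memX3 n h γ g μ c α wmin y := by
  have hb : ∀ i, 1 ≤ i → i ≤ n → wmin i ≤ y i := by
    intro i h1 h2
    obtain ⟨w, ⟨hw, -⟩, hwi⟩ := (hy i h1 h2).1
    exact hwi ▸ hw.1 i h1 h2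
  refine ⟨⟨hb, fun j h1 h2 => ?_⟩, ⟨hb, fun j h1 h2 => ?_⟩⟩
  · -- A minimizer of coordinate `j`, whose coordinate `j + 1` is at least `y (j + 1)`.
    obtain ⟨w, hw, hwj⟩ := (hy j h1 (by omega)).1
    have h3 := (hy (j + 1) (by omega) (by omega)).2 ⟨w, hw, rfl⟩
    have h4 := hw.1.2 j h1 h2
    rw [hwj] at h4
    linarith
  · -- A minimizer of coordinate `j + 1`, whose coordinate `j` is at least `y j`.
    obtain ⟨w, hw, hwj⟩ := (hy (j + 1) (by omega) (by omega)).1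
    have h3 := mul_le_mul_of_nonneg_left ((hy j h1 (by omega)).2 ⟨w, hw, rfl⟩) ha
    have h4 := hw.2.2 j h1 h2
    linarith

/-- under Assumption 3, with `z_i = max{w_i : w ∈ X2 ∩ X4}` and
`y_i = min{w_i : w ∈ X1 ∩ X3}`, we have `X ≠ ∅ ↔ y_i ≤ z_i` for all `i ∈ {1,…,n}`;
moreover if `X ≠ ∅` then `y, z ∈ X`, `z_i = max{w_i : w ∈ X}`, `y_i = min{w_i : w ∈ X}`
for all `i`, and `y_1 = z_1 = w_init`, `y_n = z_n = w_fin`. -/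
theorem feasibility_iff_y_le_z (n : ℕ) (hn : 2 ≤ n)
    (h γ g M Pmax μ c winit wfin : ℝ)
    (hh : 0 < h) (hg : 0 < g) (hM : 0 < M) (hP : 0 < Pmax) (hμ : 0 < μ)
    (hγ : 0 ≤ γ) (hc : 0 ≤ c) (hwinit : 0 ≤ winit) (hwfin : 0 ≤ wfin)
    (hA3 : 0 ≤ 1 - h * γ - h * Pmax / (2 * M * ((Pmax / (M * g * μ)) ^ 2) ^ ((3:ℝ)/2)))
    (α wmin wmax : ℕ → ℝ)
    (hwmaxpos : ∀ i, 1 ≤ i → i ≤ n → 0 ≤ wmax i)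
    (hwmax1 : wmax 1 = winit) (hwmaxn : wmax n = wfin)
    (hwmin1 : wmin 1 = winit) (hwminn : wmin n = wfin)
    (hwminmid : ∀ i, 2 ≤ i → i ≤ n - 1 → wmin i = 0)
    (z y : ℕ → ℝ)
    (hz : ∀ i, 1 ≤ i → i ≤ n →
      IsGreatest {x : ℝ | ∃ w : ℕ → ℝ,
        (memX2 n h γ g M Pmax μ c α wmax w ∧ memX4 n h γ g μ c α wmax w) ∧ w i = x}
        (z i))
    (hy : ∀ i, 1 ≤ i → i ≤ n →
      IsLeast {x : ℝ | ∃ w : ℕ → ℝ,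
        (memX1 n h γ g M Pmax μ c α wmin w ∧ memX3 n h γ g μ c α wmin w) ∧ w i = x}
        (y i)) :
    ((∃ w : ℕ → ℝ, memX n h γ g M Pmax μ c α wmin wmax w) ↔
      (∀ i, 1 ≤ i → i ≤ n → y i ≤ z i)) ∧
    ((∃ w : ℕ → ℝ, memX n h γ g M Pmax μ c α wmin wmax w) →
      memX n h γ g M Pmax μ c α wmin wmax y ∧
      memX n h γ g M Pmax μ c α wmin wmax z ∧
      (∀ i, 1 ≤ i → i ≤ n →
        IsGreatest {x : ℝ | ∃ w : ℕ → ℝ,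
          memX n h γ g M Pmax μ c α wmin wmax w ∧ w i = x} (z i) ∧
        IsLeast {x : ℝ | ∃ w : ℕ → ℝ,
          memX n h γ g M Pmax μ c α wmin wmax w ∧ w i = x} (y i)) ∧
      y 1 = winit ∧ z 1 = winit ∧ y n = wfin ∧ z n = wfin) := by
  obtain ⟨hz2, hz4⟩ :=
    memX2_memX4_of_isGreatest (ell_monotone hh hg hM hP hμ hA3) hz
  obtain ⟨hy1, hy3⟩ :=
    memX1_memX3_of_isLeast (one_sub_mul_nonneg_of_slope hh hg hM hP hμ hA3) hy
  have hle_z : ∀ w, memX n h γ g M Pmax μ c α wmin wmax w →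
      ∀ i, 1 ≤ i → i ≤ n → w i ≤ z i :=
    fun w hw i h1 h2 => (hz i h1 h2).2 ⟨w, ⟨hw.2.1, hw.2.2.2⟩, rfl⟩
  have hy_le : ∀ w, memX n h γ g M Pmax μ c α wmin wmax w →
      ∀ i, 1 ≤ i → i ≤ n → y i ≤ w i :=
    fun w hw i h1 h2 => (hy i h1 h2).2 ⟨w, ⟨hw.1, hw.2.2.1⟩, rfl⟩
  have hmem : (∀ i, 1 ≤ i → i ≤ n → y i ≤ z i) →
      memX n h γ g M Pmax μ c α wmin wmax y ∧ memX n h γ g M Pmax μ c α wmin wmax z := by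
    intro hyz
    have hymax : ∀ i, 1 ≤ i → i ≤ n → y i ≤ wmax i :=
      fun i h1 h2 => (hyz i h1 h2).trans (hz2.1 i h1 h2)
    have hzmin : ∀ i, 1 ≤ i → i ≤ n → wmin i ≤ z i :=
      fun i h1 h2 => (hy1.1 i h1 h2).trans (hyz i h1 h2)
    exact ⟨⟨hy1, ⟨hymax, hy1.2⟩, hy3, ⟨hymax, hy3.2⟩⟩,
      ⟨⟨hzmin, hz2.2⟩, hz2, ⟨hzmin, hz4.2⟩, hz4⟩⟩
  have hyz_of : (∃ w : ℕ → ℝ, memX n h γ g M Pmax μ c α wmin wmax w) →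
      ∀ i, 1 ≤ i → i ≤ n → y i ≤ z i := by
    rintro ⟨w, hw⟩ i h1 h2
    exact (hy_le w hw i h1 h2).trans (hle_z w hw i h1 h2)
  refine ⟨⟨hyz_of, fun hyz => ⟨y, (hmem hyz).1⟩⟩, fun hX => ?_⟩
  obtain ⟨hyX, hzX⟩ := hmem (hyz_of hX)
  -- At the endpoints the lower and upper bounds coincide, which fixes every element of `X`.
  have hend : ∀ w, memX n h γ g M Pmax μ c α wmin wmax w → w 1 = winit ∧ w n = wfin := by
    intro w hw
    have h1n : 1 ≤ n := by omega
    exact ⟨le_antisymm (hwmax1 ▸ hw.2.1.1 1 le_rfl h1n) (hwmin1 ▸ hw.1.1 1 le_rfl h1n),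
      le_antisymm (hwmaxn ▸ hw.2.1.1 n h1n le_rfl) (hwminn ▸ hw.1.1 n h1n le_rfl)⟩
  refine ⟨hyX, hzX, fun i h1 h2 => ⟨⟨⟨z, hzX, rfl⟩, ?_⟩, ⟨⟨y, hyX, rfl⟩, ?_⟩⟩,
    (hend y hyX).1, (hend z hzX).1, (hend y hyX).2, (hend z hzX).2⟩
  · rintro _ ⟨w, hw, rfl⟩
    exact hle_z w hw i h1 h2
  · rintro _ ⟨w, hw, rfl⟩
    exact hy_le w hw i h1 h2
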